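/- Let A : 𝒵 → 𝒵 be a self-adjoint positive semidefinite linear operator on a finite-dimensional real inner product space 𝒵, and consider the seminorm ‖z‖ := ⟨Az, z⟩^{1/2} on 𝒵 with dual seminorm ‖v‖_* := sup{⟨v,z⟩ : ‖z‖ ≤ 1} (valued in [0,∞]). Then ‖v‖_* is finite exactly when v lies in the image of A (i.e., dom ‖·‖_* = Im(A)), and ‖Az‖_* = ‖z‖ for every z ∈ 𝒵. -/

import Mathlib

open RealInnerProductSpace

/-- The dual (extended) seminorm of a seminorm `p`:
`‖v‖_* = sup { ⟪v, z⟫ : p z ≤ 1 }`, valued in `[-∞, ∞]`. -/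
noncomputable def dualSN {E : Type*} [NormedAddCommGroup E] [InnerProductSpace ℝ E]
    (p : E → ℝ) (v : E) : EReal :=
  ⨆ z : {z : E // p z ≤ 1}, ((⟪v, z.1⟫ : ℝ) : EReal)

/-!
Cauchy–Schwarz for the semi-inner product `⟪A x, y⟫` gives `‖A z‖_* ≤ ‖z‖`, and testing against
`z / ‖z‖` gives equality; in particular `‖·‖_*` is finite on the image of `A`. Conversely, the
seminorm vanishes on the kernel of `A`, so `‖v‖_* < ∞` forces `v ⊥ ker A = (Im A)ᗮ`, that is,
`v ∈ (Im A)ᗮᗮ = Im A`.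
-/

section DualSeminorm

variable {E : Type*} [NormedAddCommGroup E] [InnerProductSpace ℝ E] {p : Seminorm ℝ E} {v z : E}

lemma inner_le_dualSN (hz : p z ≤ 1) : ((⟪v, z⟫ : ℝ) : EReal) ≤ dualSN p v :=
  le_iSup (fun z : {z : E // p z ≤ 1} ↦ ((⟪v, z.1⟫ : ℝ) : EReal)) ⟨z, hz⟩

lemma dualSN_le_of_forall_inner_le {c : ℝ} (hc : 0 ≤ c) (h : ∀ z, ⟪v, z⟫ ≤ c * p z) :
    dualSN p v ≤ c :=
  iSup_le fun ⟨z, hz⟩ ↦ EReal.coe_le_coe <| (h z).trans (mul_le_of_le_one_right hc hz)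

-- If `p z = 0`, then `⟪v, z⟫ / p z = 0`, and the test vector `(p z)⁻¹ • z` of the proof is `0`.
lemma inner_div_le_dualSN (v z : E) : ((⟪v, z⟫ / p z : ℝ) : EReal) ≤ dualSN p v := by
  have hunit : p ((p z)⁻¹ • z) ≤ 1 := by
    rw [map_smul_eq_mul, norm_inv, Real.norm_of_nonneg (apply_nonneg p z)]
    exact inv_mul_le_one
  simpa only [real_inner_smul_right, inv_mul_eq_div] using inner_le_dualSN (v := v) hunit

lemma inner_eq_zero_of_dualSN_lt_top (hv : dualSN p v < ⊤) (hz : p z = 0) : ⟪v, z⟫ = 0 := by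
  by_contra hne
  refine hv.ne (EReal.eq_top_iff_forall_lt _ |>.mpr fun y ↦ ?_)
  have hball : p (((y + 1) / ⟪v, z⟫) • z) ≤ 1 := by
    rw [map_smul_eq_mul, hz, mul_zero]
    exact zero_le_one
  have hval : ⟪v, ((y + 1) / ⟪v, z⟫) • z⟫ = y + 1 := by
    rw [real_inner_smul_right, div_mul_cancel₀ _ hne]
  calc (y : EReal) < ((y + 1 : ℝ) : EReal) := EReal.coe_lt_coe (lt_add_one y)
    _ ≤ dualSN p v := hval ▸ inner_le_dualSN hball

end DualSeminorm

section EnergySeminorm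

variable {𝕜 E : Type*} [RCLike 𝕜] [NormedAddCommGroup E] [InnerProductSpace 𝕜 E]
  {A : E →ₗ[𝕜] E}

/-- The semi-inner product `(x, y) ↦ ⟪A x, y⟫` of a positive operator `A`. It is a plain structure
rather than an instance, since `E` already carries an inner product. -/
abbrev energyCore (hA : A.IsPositive) : PreInnerProductSpace.Core 𝕜 E where
  inner x y := inner 𝕜 (A x) y
  conj_inner_symm x y := by rw [inner_conj_symm, hA.isSymmetric]
  re_inner_nonneg := hA.re_inner_nonneg_left
  add_left x y z := by rw [map_add, inner_add_left]
  smul_left x y r := by rw [map_smul, inner_smul_left]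

/-- The seminorm `z ↦ √⟪A z, z⟫` of a positive operator `A`, obtained from `energyCore` so that
the triangle and Cauchy–Schwarz inequalities are those of a semi-inner product. -/
noncomputable def energySeminorm (hA : A.IsPositive) : Seminorm 𝕜 E :=
  letI := energyCore hA
  letI : Norm E := InnerProductSpace.Core.toNorm (𝕜 := 𝕜)
  have hcore : SeminormedSpace.Core 𝕜 E := InnerProductSpace.Core.toSeminormedSpaceCore _
  Seminorm.of norm hcore.norm_triangle hcore.norm_smul

lemma energySeminorm_apply (hA : A.IsPositive) (z : E) :
    energySeminorm hA z = √(RCLike.re (inner 𝕜 (A z) z)) :=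
  rfl

lemma norm_inner_map_le_energySeminorm_mul (hA : A.IsPositive) (z w : E) :
    ‖inner 𝕜 (A z) w‖ ≤ energySeminorm hA z * energySeminorm hA w :=
  letI := energyCore hA
  InnerProductSpace.Core.norm_inner_le_norm (𝕜 := 𝕜) z w

lemma energySeminorm_eq_zero_of_mem_ker (hA : A.IsPositive) {z : E} (hz : z ∈ A.ker) :
    energySeminorm hA z = 0 := by
  rw [energySeminorm_apply, LinearMap.mem_ker.mp hz, inner_zero_left, map_zero, Real.sqrt_zero]

end EnergySeminorm

section DualEnergySeminorm

variable {E : Type*} [NormedAddCommGroup E] [InnerProductSpace ℝ E] {A : E →ₗ[ℝ] E}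

theorem dualSN_energySeminorm_map (hA : A.IsPositive) (z : E) :
    dualSN (energySeminorm hA) (A z) = energySeminorm hA z := by
  apply le_antisymm
  · exact dualSN_le_of_forall_inner_le (apply_nonneg _ z) fun w ↦
      (le_abs_self _).trans (norm_inner_map_le_energySeminorm_mul hA z w)
  · have hdiv : ⟪A z, z⟫ / energySeminorm hA z = energySeminorm hA z := Real.div_sqrt
    simpa only [hdiv] using inner_div_le_dualSN (p := energySeminorm hA) (A z) z

theorem mem_orthogonal_ker_of_dualSN_energySeminorm_lt_top (hA : A.IsPositive) {v : E}
    (hv : dualSN (energySeminorm hA) v < ⊤) : v ∈ A.kerᗮ :=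
  A.ker.mem_orthogonal' v |>.mpr fun _ hk ↦
    inner_eq_zero_of_dualSN_lt_top hv (energySeminorm_eq_zero_of_mem_ker hA hk)

theorem dualSN_energySeminorm_lt_top_iff (hA : A.IsPositive) [A.range.HasOrthogonalProjection]
    {v : E} : dualSN (energySeminorm hA) v < ⊤ ↔ v ∈ A.range := by
  constructor
  · intro hv
    rw [← A.range.orthogonal_orthogonal, hA.isSymmetric.orthogonal_range]
    exact mem_orthogonal_ker_of_dualSN_energySeminorm_lt_top hA hv
  · rintro ⟨z, rfl⟩
    rw [dualSN_energySeminorm_map]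
    exact EReal.coe_lt_top _

end DualEnergySeminorm

theorem stmt0_general {Z : Type*} [NormedAddCommGroup Z] [InnerProductSpace ℝ Z]
    (A : Z →ₗ[ℝ] Z) [A.range.HasOrthogonalProjection]
    (hsa : ∀ x y : Z, ⟪A x, y⟫ = ⟪x, A y⟫) (hpsd : ∀ x : Z, 0 ≤ ⟪A x, x⟫) :
    (∀ v : Z, dualSN (fun z => Real.sqrt ⟪A z, z⟫) v < (⊤ : EReal) ↔ v ∈ LinearMap.range A)
      ∧ ∀ z : Z,
        dualSN (fun z => Real.sqrt ⟪A z, z⟫) (A z) = ((Real.sqrt ⟪A z, z⟫ : ℝ) : EReal) :=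
  have hA : A.IsPositive := ⟨hsa, hpsd⟩
  ⟨fun _ ↦ dualSN_energySeminorm_lt_top_iff hA, dualSN_energySeminorm_map hA⟩

/-- For a self-adjoint positive semidefinite linear operator `A` on a
finite-dimensional real inner product space and the seminorm `‖z‖ := √⟪A z, z⟫`, the dual
seminorm is finite exactly on the image of `A`, and `‖A z‖_* = ‖z‖` for every `z`. -/
theorem stmt0 {Z : Type*} [NormedAddCommGroup Z] [InnerProductSpace ℝ Z]
    [FiniteDimensional ℝ Z]
    (A : Z →ₗ[ℝ] Z) (hsa : ∀ x y : Z, ⟪A x, y⟫ = ⟪x, A y⟫) (hpsd : ∀ x : Z, 0 ≤ ⟪A x, x⟫) :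
    (∀ v : Z, dualSN (fun z => Real.sqrt ⟪A z, z⟫) v < (⊤ : EReal) ↔ v ∈ LinearMap.range A)
      ∧ ∀ z : Z,
        dualSN (fun z => Real.sqrt ⟪A z, z⟫) (A z) = ((Real.sqrt ⟪A z, z⟫ : ℝ) : EReal) :=
  stmt0_general A hsa hpsd
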